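/- Let 𝐫 = ((r_1,s_1),…,(r_v,s_v)) and 𝐭 = ((t_1,u_1),…,(t_w,u_w)) be vectors of pairs of integers with all s_i, u_j ≠ 0, such that (Q_{𝐫,𝐭}(q; n))_{n≥0} is a well-defined sequence. Let N_1 := {i : s_i < 0}, N_2 := {j : u_j < 0}, and s := ∑_{i∈N_1} s_i − ∑_{j∈N_2} u_j, and assume s ≥ 0. Then the following are equivalent: (i) the sequence (Q_{𝐫,𝐭}(q; n))_{n≥0} is q-integral; (ii) for all but finitely many positive integers b, the function Δ_b^{𝐫,𝐭} is non-negative on ℝ_{≥0}. -/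

import Mathlib

open Polynomial
open scoped Classical

noncomputable section

/-- The generalized Dwork map `D_b(α)`: the unique rational whose reduced denominator is
coprime to `b` and such that `b·D_b(α) − α ∈ {0, 1, …, b−1}`. -/
def dwork (b : ℕ) (α : ℚ) : ℚ :=
  if h : ∃ θ : ℚ, Nat.Coprime θ.den b ∧ ∃ k : ℤ, 0 ≤ k ∧ k < (b : ℤ) ∧ (b : ℚ) * θ - α = (k : ℚ)
  then h.choose else 0

/-- `α ∈ ℤ_{≤0}`. -/
def IsNonPosInt (α : ℚ) : Prop := ∃ m : ℤ, m ≤ 0 ∧ α = (m : ℚ)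

/-- `α ∈ ℤ_{>0}`. -/
def IsPosInt (α : ℚ) : Prop := ∃ m : ℤ, 0 < m ∧ α = (m : ℚ)

/-- `𝔫_α`. -/
def frakn (α : ℚ) : ℤ := if 0 ≤ α then α.num else |α.num| + 1

/-- `⟨x⟩`: the fractional part of `x` if `x ∉ ℤ`, and `1` if `x ∈ ℤ`. -/
def cangle (x : ℝ) : ℝ := if ∃ m : ℤ, x = (m : ℝ) then 1 else Int.fract x

/-- Christol order `x ⪯ y`. -/
def cle (x y : ℝ) : Prop := cangle x < cangle y ∨ (cangle x = cangle y ∧ y ≤ x)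

/-- The step function `δ_b(r, s, ·)`. -/
def qdelta (b : ℕ) (r s : ℤ) (x : ℝ) : ℤ :=
  if Int.gcd (s / (Nat.gcd (Int.gcd r s) b : ℤ)) (((b / Nat.gcd (Int.gcd r s) b : ℕ)) : ℤ) = 1 then
    ⌊(Nat.gcd (Int.gcd r s) b : ℝ) * x
        - ((dwork (b / Nat.gcd (Int.gcd r s) b) ((r : ℚ) / (s : ℚ)) : ℚ) : ℝ)
        - ((⌊1 - (r : ℚ) / (s : ℚ)⌋ : ℤ) : ℝ) / ((b / Nat.gcd (Int.gcd r s) b : ℕ) : ℝ)⌋ + 1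
  else 0

/-- The Landau-type step function `Δ_b^{𝐫,𝐭}`. -/
def qDeltaFn {v w : ℕ} (b : ℕ) (rr : Fin v → ℤ × ℤ) (tt : Fin w → ℤ × ℤ) (x : ℝ) : ℤ :=
  (∑ i, qdelta b (rr i).1 (rr i).2 x) - (∑ j, qdelta b (tt j).1 (tt j).2 x)

/-- The q-Pochhammer symbol `(q^r; q^s)_n` for `n ∈ ℕ`, inside `ℚ(q)`. -/
def qPoch (r s : ℤ) (n : ℕ) : RatFunc ℚ :=
  ∏ i ∈ Finset.range n, (1 - RatFunc.X ^ (r + s * (i : ℤ)))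

/-- The q-Pochhammer symbol `(q^r; q^s)_n` for `n ∈ ℤ`. -/
def qPochZ (r s : ℤ) (n : ℤ) : RatFunc ℚ :=
  if 0 ≤ n then qPoch r s n.toNat else (qPoch (r - s) (-s) (-n).toNat)⁻¹

/-- Multiplicity of `p` in `g`: the largest `k` with `p^k ∣ g`. -/
def polyMult (p g : Polynomial ℚ) : ℕ := sSup {k : ℕ | p ^ k ∣ g}

/-- The valuation `v_{φ_b}` on `ℚ(q)` attached to the `b`-th cyclotomic polynomial. -/
def cycVal (b : ℕ) (f : RatFunc ℚ) : ℤ :=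
  (polyMult (cyclotomic b ℚ) f.num : ℤ) - (polyMult (cyclotomic b ℚ) f.denom : ℤ)

/-- The image of an integer polynomial in `ℚ(q)`. -/
def polyZ (g : Polynomial ℤ) : RatFunc ℚ :=
  algebraMap (Polynomial ℚ) (RatFunc ℚ) (g.map (Int.castRingHom ℚ))

/-- `f ∈ ℤ[q⁻¹, q]`. -/
def IsIntLaurent (f : RatFunc ℚ) : Prop :=
  ∃ (m : ℕ) (g : Polynomial ℤ), f * RatFunc.X ^ m = polyZ g

/-- `f ∈ ℤ[q]`. -/
def IsIntPoly (f : RatFunc ℚ) : Prop := ∃ g : Polynomial ℤ, f = polyZ g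

/-- The ratio attached to a pair of integers. -/
def ratOf (p : ℤ × ℤ) : ℚ := (p.1 : ℚ) / (p.2 : ℚ)

/-- The q-hypergeometric term `Q_{𝐫,𝐭}(q; n)`, `n ∈ ℕ`. -/
def qHyp {v w : ℕ} (rr : Fin v → ℤ × ℤ) (tt : Fin w → ℤ × ℤ) (n : ℕ) : RatFunc ℚ :=
  (∏ i, qPoch (rr i).1 (rr i).2 n) / (∏ j, qPoch (tt j).1 (tt j).2 n)

/-- The q-hypergeometric term `Q_{𝐫,𝐭}(q; n)`, `n ∈ ℤ`. -/
def qHypZ {v w : ℕ} (rr : Fin v → ℤ × ℤ) (tt : Fin w → ℤ × ℤ) (n : ℤ) : RatFunc ℚ :=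
  (∏ i, qPochZ (rr i).1 (rr i).2 n) / (∏ j, qPochZ (tt j).1 (tt j).2 n)

/-- `c := gcd(r, s, b)`. -/
def cOf (p : ℤ × ℤ) (b : ℕ) : ℕ := Nat.gcd (Int.gcd p.1 p.2) b

/-- Membership in `V_b` (resp. `W_b`): `gcd(s, b) = gcd(r, s, b)`. -/
def inV (p : ℤ × ℤ) (b : ℕ) : Prop := Nat.gcd p.2.natAbs b = cOf p b

/-- `d_{𝐫,𝐭}`: the lcm of all the `s_i` and `u_j`. -/
def dRT {v w : ℕ} (rr : Fin v → ℤ × ℤ) (tt : Fin w → ℤ × ℤ) : ℕ :=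
  Nat.lcm (Finset.univ.lcm fun i => ((rr i).2).natAbs)
    (Finset.univ.lcm fun j => ((tt j).2).natAbs)

/-- `b̃`: the greatest divisor of `b` coprime to `d`. -/
def btilde (d b : ℕ) : ℕ := Nat.findGreatest (fun k => k ∣ b ∧ Nat.Coprime k d) b

/-- The unique `a ∈ {1,…,d}` with `a·b̃ ≡ 1 (mod d)`. -/
def aOf (d b : ℕ) : ℕ :=
  if h : ∃ a, 1 ≤ a ∧ a ≤ d ∧ (a * btilde d b) % d = 1 % d then h.choose else 1

/-- The representative of `b` modulo `d` lying in `{1,…,d}`. -/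
def repMod (d b : ℕ) : ℕ := if b % d = 0 then d else b % d

/-- The jump abscissa `(⟨e·α⟩ + k)/c − ⌊1 − a·α⌋`. -/
def jumpPt (p : ℤ × ℤ) (b : ℕ) (a ei : ℤ) (k : ℕ) : ℝ :=
  (cangle (((ei : ℚ) * ratOf p : ℚ) : ℝ) + (k : ℝ)) / (cOf p b : ℝ)
    - ((⌊1 - (a : ℚ) * ratOf p⌋ : ℤ) : ℝ)

/-- Number of pairs `(i,k)` with jump abscissa `⪯ x` coming from one pair `p`. -/
def XiCount (p : ℤ × ℤ) (b : ℕ) (a ei : ℤ) (x : ℝ) : ℕ :=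
  if inV p b then ((Finset.range (cOf p b)).filter fun k => cle (jumpPt p b a ei k) x).card else 0

/-- The generalized Christol step function `Ξ_{𝐫,𝐭}(b, ·)`, relative to choices `e`, `f`. -/
def Xi {v w : ℕ} (rr : Fin v → ℤ × ℤ) (tt : Fin w → ℤ × ℤ) (b : ℕ)
    (e : Fin v → ℤ) (f : Fin w → ℤ) (x : ℝ) : ℤ :=
  (∑ i, (XiCount (rr i) b ((aOf (dRT rr tt) b : ℕ) : ℤ) (e i) x : ℤ))
    - (∑ j, (XiCount (tt j) b ((aOf (dRT rr tt) b : ℕ) : ℤ) (f j) x : ℤ))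

/-- `ei` is an admissible choice for the pair `p` and `b`: positive with `b·ei ≡ c (mod s)`. -/
def goodChoice (p : ℤ × ℤ) (b : ℕ) (ei : ℤ) : Prop :=
  inV p b → 0 < ei ∧ p.2 ∣ ((b : ℤ) * ei - (cOf p b : ℤ))

end

/-!
Up to a unit of `ℤ[q]`, every factor `1 - q ^ m` is a product of powers of `q` and of cyclotomic
polynomials `Φ_b`, so `Q(q; n)` is a unit times `∏ p ^ e_p(n)` over these pairwise non-associated
primes `p` of `ℤ[q]`. Some `C ^ n` clears the denominators of all the `Q(q; n)` exactly when each
`e_p(n)` is bounded below by a linear function of `n` and all but finitely many `p` have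
`e_p(n) ≥ 0` for every `n`.

The exponent of `Φ_b` in `(q^r; q^s)_n` is the number of `i < n` with `b ∣ r + s i`; it is at most
`n`, and `δ_b(r, s, x)` is this number for `n = ⌊b x + θ⌋`, where `θ` is the fractional part of
`1 - r / s`. The shift `θ` depends on the pair `(r, s)`, but for `b` large one `n` serves for all
pairs at once, so that `Δ_b` and the exponent of `Φ_b` take the same values. The exponent of `q`
differs by `O(n)` from `s n (n - 1) / 2`, where `s` is the difference of the sums of the negative
steps above and below, so it has a linear lower bound if and only if `s ≥ 0`.
-/

open Filter

/-! ### Products of prime powers in a field -/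

theorem finite_setOf_prime_dvd {ι M : Type*} [CommMonoidWithZero M] [IsCancelMulZero M]
    [WfDvdMonoid M] {p : ι → M} (hp : ∀ i, Prime (p i))
    (hpp : Pairwise fun i j => ¬ Associated (p i) (p j)) {c : M} (hc : c ≠ 0) :
    {i | p i ∣ c}.Finite := by
  obtain ⟨s, hs, hsc⟩ := WfDvdMonoid.exists_factors c hc
  have hsub : {i | p i ∣ c} ⊆ ⋃ a ∈ {a | a ∈ s}, {i | Associated (p i) a} := by
    intro i hi
    obtain ⟨a, ha, hia⟩ := (hp i).exists_mem_multiset_dvd (hsc.dvd_iff_dvd_right.mpr hi)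
    exact Set.mem_biUnion ha ((hp i).irreducible.associated_of_dvd (hs a ha) hia)
  refine (s.finite_toSet.biUnion fun a _ => Set.Subsingleton.finite ?_).subset hsub
  intro i hi j hj
  exact hpp.eq (not_not.mpr (hi.trans hj.symm))

section Factorization

variable {ι R K : Type*} [CommRing R] [Field K] {φ : R →+* K} {p : ι → R}
  {f g : K} {v v' : ι →₀ ℤ}

/-- `f = u * ∏ i, p i ^ v i` in the field `K`, for some unit `u` of `R`, where `R` is mapped to `K`
by an arbitrary `φ` rather than by an algebra structure, so that `polyZ` can serve as `φ`. -/
def HasFactorization (φ : R →+* K) (p : ι → R) (f : K) (v : ι →₀ ℤ) : Prop :=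
  ∃ u : Rˣ, f = φ u * v.prod fun i k => φ (p i) ^ k

namespace HasFactorization

theorem one : HasFactorization φ p 1 0 := ⟨1, by simp⟩

theorem zpow_single (i : ι) (k : ℤ) : HasFactorization φ p (φ (p i) ^ k) (Finsupp.single i k) :=
  ⟨1, by simp⟩

theorem neg (hf : HasFactorization φ p f v) : HasFactorization φ p (-f) v := by
  obtain ⟨u, rfl⟩ := hf
  exact ⟨-u, by simp⟩

theorem inv (hf : HasFactorization φ p f v) : HasFactorization φ p f⁻¹ (-v) := by
  obtain ⟨u, rfl⟩ := hf
  refine ⟨u⁻¹, ?_⟩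
  simp [mul_comm, Finsupp.prod, Finset.prod_inv_distrib]

theorem mul (hp : ∀ i, φ (p i) ≠ 0) (hf : HasFactorization φ p f v)
    (hg : HasFactorization φ p g v') : HasFactorization φ p (f * g) (v + v') := by
  obtain ⟨u, rfl⟩ := hf
  obtain ⟨u', rfl⟩ := hg
  refine ⟨u * u', ?_⟩
  rw [Finsupp.prod_add_index' (fun _ => zpow_zero _) (fun i => zpow_add₀ (hp i)), Units.val_mul,
    map_mul, mul_mul_mul_comm]

theorem div (hp : ∀ i, φ (p i) ≠ 0) (hf : HasFactorization φ p f v)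
    (hg : HasFactorization φ p g v') : HasFactorization φ p (f / g) (v - v') := by
  simpa only [div_eq_mul_inv, sub_eq_add_neg] using hf.mul hp hg.inv

theorem prod (hp : ∀ i, φ (p i) ≠ 0) {κ : Type*} {s : Finset κ} {f : κ → K} {v : κ → ι →₀ ℤ}
    (h : ∀ a ∈ s, HasFactorization φ p (f a) (v a)) :
    HasFactorization φ p (∏ a ∈ s, f a) (∑ a ∈ s, v a) := by
  induction s using Finset.cons_induction with
  | empty => simpa only [Finset.prod_empty, Finset.sum_empty] using one
  | cons a s ha ih =>
    rw [Finset.forall_mem_cons] at h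
    simpa only [Finset.prod_cons, Finset.sum_cons] using h.1.mul hp (ih h.2)

theorem pow (hp : ∀ i, φ (p i) ≠ 0) (hf : HasFactorization φ p f v) (n : ℕ) :
    HasFactorization φ p (f ^ n) (n • v) := by
  simpa using prod hp (s := Finset.range n) (fun _ _ => hf)

theorem exists_mul_map_prod_eq (hp : ∀ i, φ (p i) ≠ 0) (hf : HasFactorization φ p f v) :
    ∃ u : Rˣ, f * φ (∏ i ∈ v.support, p i ^ (-v i).toNat) =
      φ (u * ∏ i ∈ v.support, p i ^ (v i).toNat) := by
  obtain ⟨u, rfl⟩ := hf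
  refine ⟨u, ?_⟩
  rw [map_mul, mul_assoc, Finsupp.prod, map_prod, map_prod, ← Finset.prod_mul_distrib]
  congr 1
  refine Finset.prod_congr rfl fun i _ => ?_
  rw [map_pow, map_pow, ← zpow_natCast, ← zpow_natCast, ← zpow_add₀ (hp i)]
  congr 1
  omega

theorem mem_range (hp : ∀ i, φ (p i) ≠ 0) (hf : HasFactorization φ p f v) (hv : 0 ≤ v) :
    f ∈ φ.range := by
  obtain ⟨u, hu⟩ := hf.exists_mul_map_prod_eq hp
  have hden : ∏ i ∈ v.support, p i ^ (-v i).toNat = 1 :=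
    Finset.prod_eq_one fun i _ => by rw [Int.toNat_of_nonpos (neg_nonpos.mpr (hv i)), pow_zero]
  rw [hden, map_one, mul_one] at hu
  exact ⟨_, hu.symm⟩

theorem pow_toNat_neg_dvd [IsDomain R] (hφ : Function.Injective φ) (hp : ∀ i, Prime (p i))
    (hpp : Pairwise fun i j => ¬ Associated (p i) (p j)) (hf : HasFactorization φ p f v) {c : R}
    (hc : φ c * f ∈ φ.range) (i : ι) : p i ^ (-v i).toNat ∣ c := by
  rcases le_or_gt 0 (v i) with hi | hi
  · rw [Int.toNat_of_nonpos (neg_nonpos.mpr hi), pow_zero]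
    exact one_dvd c
  have hp' (i : ι) : φ (p i) ≠ 0 := (map_ne_zero_iff φ hφ).mpr (hp i).ne_zero
  obtain ⟨u, hu⟩ := hf.exists_mul_map_prod_eq hp'
  obtain ⟨h, hh⟩ := hc
  set num := ∏ j ∈ v.support, p j ^ (v j).toNat
  set den := ∏ j ∈ v.support, p j ^ (-v j).toNat
  have heq : h * den = c * (u * num) :=
    hφ (by rw [map_mul, map_mul, hh, mul_assoc, hu])
  have hdvd : p i ^ (-v i).toNat ∣ c * (u * num) :=
    heq ▸ (Finset.dvd_prod_of_mem _ (Finsupp.mem_support_iff.mpr hi.ne)).mul_left h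
  refine (hp i).pow_dvd_of_dvd_mul_right _ ?_ hdvd
  rw [u.isUnit.dvd_mul_left, (hp i).dvd_finsetProd_iff]
  rintro ⟨j, -, hj⟩
  rcases eq_or_ne i j with rfl | hij
  · rw [Int.toNat_of_nonpos hi.le, pow_zero] at hj
    exact (hp i).not_dvd_one hj
  · exact hpp hij (((hp i).dvd_prime_iff_associated (hp j)).mp ((hp i).dvd_of_dvd_pow hj))

end HasFactorization

theorem exists_pow_mul_mem_range (hp : ∀ i, φ (p i) ≠ 0) {F : ℕ → K} {v : ℕ → ι →₀ ℤ}
    (hF : ∀ n, HasFactorization φ p (F n) (v n))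
    (hM : ∀ i, ∃ M : ℕ, ∀ n : ℕ, -(n * M : ℤ) ≤ v n i)
    (hfin : ∀ᶠ i in cofinite, ∀ n, 0 ≤ v n i) :
    ∃ c, φ c ≠ 0 ∧ ∀ n, φ c ^ n * F n ∈ φ.range := by
  choose M hM using hM
  rw [eventually_cofinite] at hfin
  set S := hfin.toFinset
  have hc : HasFactorization φ p (φ (∏ i ∈ S, p i ^ M i))
      (∑ i ∈ S, Finsupp.single i (M i : ℤ)) := by
    simp only [map_prod, map_pow, ← zpow_natCast]
    exact .prod hp fun i _ => .zpow_single i _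
  refine ⟨∏ i ∈ S, p i ^ M i, ?_, fun n => ((hc.pow hp n).mul hp (hF n)).mem_range hp fun i => ?_⟩
  · simp only [map_prod, map_pow]
    exact Finset.prod_ne_zero_iff.mpr fun i _ => pow_ne_zero _ (hp i)
  · simp only [Finsupp.coe_zero, Pi.zero_apply, Finsupp.add_apply, Finsupp.smul_apply, nsmul_eq_mul,
      Finsupp.finsetSum_apply, Finsupp.single_apply, Finset.sum_ite_eq']
    split_ifs with hi
    · linarith [hM i n]
    · simpa [S] using not_not.mp (mt hfin.mem_toFinset.mpr hi) n

theorem exists_pow_mul_mem_range_iff [IsDomain R] [WfDvdMonoid R] (hφ : Function.Injective φ)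
    (hp : ∀ i, Prime (p i)) (hpp : Pairwise fun i j => ¬ Associated (p i) (p j)) {F : ℕ → K}
    {v : ℕ → ι →₀ ℤ} (hF : ∀ n, HasFactorization φ p (F n) (v n)) :
    (∃ c ≠ 0, ∀ n, φ c ^ n * F n ∈ φ.range) ↔
      (∀ i, ∃ M : ℕ, ∀ n : ℕ, -(n * M : ℤ) ≤ v n i) ∧ ∀ᶠ i in cofinite, ∀ n, 0 ≤ v n i := by
  constructor
  · rintro ⟨c, hc, hcF⟩
    have hdvd (n : ℕ) (i : ι) : p i ^ (-v n i).toNat ∣ c ^ n :=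
      (hF n).pow_toNat_neg_dvd hφ hp hpp (by rw [map_pow]; exact hcF n) i
    constructor
    · intro i
      have hfin : FiniteMultiplicity (p i) c := .of_prime_left (hp i) hc
      refine ⟨multiplicity (p i) c, fun n => ?_⟩
      have hle := (hfin.pow (hp i) (k := n)).pow_dvd_iff_le_multiplicity.mp (hdvd n i)
      rw [hfin.multiplicity_pow (hp i)] at hle
      rw [← Nat.cast_mul]
      omega
    · filter_upwards [(finite_setOf_prime_dvd hp hpp hc).compl_mem_cofinite] with i hi n
      by_contra! hneg
      exact hi ((hp i).dvd_of_dvd_pow ((dvd_pow_self _ (by omega)).trans (hdvd n i)))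
  · rintro ⟨hM, hfin⟩
    obtain ⟨c, hc, hcF⟩ := exists_pow_mul_mem_range
      (fun i => (map_ne_zero_iff φ hφ).mpr (hp i).ne_zero) hF hM hfin
    exact ⟨c, (map_ne_zero_iff φ hφ).mp hc, hcF⟩

end Factorization

/-! ### Multiples of `b` in arithmetic progressions -/

/-- The number of `i < n` such that `b` divides `r + s * i`: the exponent of the `b`-th cyclotomic
polynomial in `(q^r; q^s)_n`. -/
def dvdCount (b : ℕ) (r s : ℤ) (n : ℕ) : ℕ :=
  Nat.count (fun i : ℕ => (b : ℤ) ∣ r + s * i) n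

theorem dvdCount_le (b : ℕ) (r s : ℤ) (n : ℕ) : dvdCount b r s n ≤ n :=
  Nat.count_le _

theorem dvdCount_eq_sum (b : ℕ) (r s : ℤ) (n : ℕ) :
    (dvdCount b r s n : ℤ) = ∑ i ∈ Finset.range n, if (b : ℤ) ∣ r + s * i then 1 else 0 := by
  rw [dvdCount, Nat.count_eq_card_filter_range, Finset.natCast_card_filter]

theorem dvdCount_succ_of_not_dvd {b : ℕ} {r s : ℤ} {n : ℕ} (h : ¬ (b : ℤ) ∣ r + s * n) :
    dvdCount b r s (n + 1) = dvdCount b r s n := by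
  simp [dvdCount, Nat.count_succ, h]

theorem dvdCount_eq_zero {b : ℕ} {r s : ℤ} (h : ∀ i : ℕ, ¬ (b : ℤ) ∣ r + s * i) (n : ℕ) :
    dvdCount b r s n = 0 := by
  simp [dvdCount, Nat.count_eq_card_filter_range, h]

theorem dvdCount_mul_left {c : ℕ} (hc : 0 < c) (b : ℕ) (r s : ℤ) (n : ℕ) :
    dvdCount (c * b) (c * r) (c * s) n = dvdCount b r s n := by
  have hc' : (c : ℤ) ≠ 0 := by exact_mod_cast hc.ne'
  simp only [dvdCount, Nat.cast_mul, mul_assoc, ← mul_add, mul_dvd_mul_iff_left hc']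

theorem dvd_add_mul_iff_modEq {b : ℕ} {r s : ℤ} (hsb : IsCoprime s (b : ℤ)) {k : ℕ}
    (hk : (b : ℤ) ∣ r + s * k) (i : ℕ) : (b : ℤ) ∣ r + s * i ↔ i ≡ k [MOD b] := by
  calc (b : ℤ) ∣ r + s * i ↔ (b : ℤ) ∣ s * (k - i) := by
        rw [← dvd_sub_right hk]; ring_nf
    _ ↔ (b : ℤ) ∣ k - i := ⟨hsb.symm.dvd_of_dvd_mul_left, fun h => h.mul_left s⟩
    _ ↔ i ≡ k [MOD b] := Nat.modEq_iff_dvd.symm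

theorem neg_neg_ediv_eq_sub_one_ediv_add_one {b : ℤ} (hb : 0 < b) (a : ℤ) :
    -(-a / b) = (a - 1) / b + 1 := by
  have hdiv := Int.emod_add_mul_ediv (a - 1) b
  have hlt := Int.emod_lt_of_pos (a - 1) hb
  have hnonneg := Int.emod_nonneg (a - 1) hb.ne'
  have h := ((Int.ediv_emod_unique (a := -a) (r := b - 1 - (a - 1) % b)
    (q := -((a - 1) / b) - 1) hb).mpr ⟨by linarith, by omega, by omega⟩).1
  omega

theorem dvdCount_eq_ediv {b : ℕ} {r s : ℤ} (hsb : IsCoprime s (b : ℤ)) {k : ℕ} (hkb : k < b)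
    (hk : (b : ℤ) ∣ r + s * k) (n : ℕ) : (dvdCount b r s n : ℤ) = (n - k - 1) / b + 1 := by
  have hb : 0 < b := by omega
  have hcount : dvdCount b r s n = Nat.count (· ≡ k [MOD b]) n := by
    simp only [dvdCount, dvd_add_mul_iff_modEq hsb hk]
  have hceil := Nat.count_modEq_card_eq_ceil n hb k
  rw [Nat.mod_eq_of_lt hkb] at hceil
  rw [hcount, hceil, ← neg_neg_ediv_eq_sub_one_ediv_add_one (by exact_mod_cast hb),
    ← Rat.ceil_intCast_div_natCast]
  push_cast
  rfl

theorem exists_dvd_add_mul {b : ℕ} (hb : 0 < b) (r : ℤ) {s : ℤ} (hsb : IsCoprime s (b : ℤ)) :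
    ∃ k : ℕ, k < b ∧ (b : ℤ) ∣ r + s * k := by
  have hbZ : (0 : ℤ) < b := by exact_mod_cast hb
  obtain ⟨x, y, hxy⟩ := hsb
  have hlt := Int.emod_lt_of_pos (-r * x) hbZ
  have hcast := Int.toNat_of_nonneg (Int.emod_nonneg (-r * x) hbZ.ne')
  refine ⟨((-r * x) % b).toNat, by omega, r * y - s * ((-r * x) / b), ?_⟩
  rw [hcast, Int.emod_def]
  linear_combination (-r) * hxy

theorem den_intCast_div_intCast_dvd (r s : ℤ) : ((r / s : ℚ).den : ℤ) ∣ s := by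
  rw [← Rat.divInt_eq_div]
  exact Rat.den_dvd r s

theorem dwork_spec {b : ℕ} (hb : 0 < b) {α : ℚ} (hα : α.den.Coprime b) :
    (dwork b α).den.Coprime b ∧
      ∃ k : ℤ, 0 ≤ k ∧ k < (b : ℤ) ∧ (b : ℚ) * dwork b α - α = (k : ℚ) := by
  have hex : ∃ θ : ℚ, θ.den.Coprime b ∧
      ∃ k : ℤ, 0 ≤ k ∧ k < (b : ℤ) ∧ (b : ℚ) * θ - α = (k : ℚ) := by
    obtain ⟨k, hkb, m, hm⟩ := exists_dvd_add_mul hb α.num (Nat.isCoprime_iff_coprime.mpr hα)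
    refine ⟨m / α.den, ?_, k, by omega, by omega, ?_⟩
    · have hden : (((m : ℚ) / α.den).den : ℤ) ∣ α.den := by
        exact_mod_cast den_intCast_div_intCast_dvd m α.den
      exact hα.coprime_dvd_left (Int.natCast_dvd_natCast.mp hden)
    · have hmQ : (α.num : ℚ) + α.den * k = b * m := by exact_mod_cast hm
      have hden : (α.den : ℚ) ≠ 0 := by exact_mod_cast α.den_ne_zero
      rw [← mul_div_assoc, ← hmQ, add_div, Rat.num_div_den, mul_div_cancel_left₀ _ hden]
      push_cast
      ring
  rw [dwork, dif_pos hex]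
  exact hex.choose_spec

theorem exists_dwork_eq {b : ℕ} (hb : 0 < b) {r s : ℤ} (hs : s ≠ 0) (hsb : IsCoprime s (b : ℤ)) :
    ∃ k : ℕ, k < b ∧ (b : ℤ) ∣ r + s * k ∧ dwork b (r / s) = (r / s + k) / b := by
  have hsQ : (s : ℚ) ≠ 0 := by exact_mod_cast hs
  have hbQ : (b : ℚ) ≠ 0 := by exact_mod_cast hb.ne'
  obtain ⟨hcop, k, hk0, hkb, hk⟩ := dwork_spec hb
    (Nat.isCoprime_iff_coprime.mp
      (hsb.of_isCoprime_of_dvd_left (den_intCast_div_intCast_dvd r s)))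
  lift k to ℕ using hk0
  generalize dwork b (r / s) = θ at hcop hk ⊢
  refine ⟨k, by omega, ?_, by rw [eq_div_iff hbQ]; push_cast at hk; linarith⟩
  have hmul : (b : ℤ) * (s * θ.num) = (r + s * k) * θ.den := by
    suffices (b : ℚ) * (s * θ.num) = (r + s * k) * θ.den by exact_mod_cast this
    calc (b : ℚ) * (s * θ.num) = s * (b * θ) * θ.den := by rw [← Rat.mul_den_eq_num θ]; ring
      _ = (r + s * k) * θ.den := by
        rw [sub_eq_iff_eq_add.mp hk, mul_add, mul_div_cancel₀ _ hsQ, add_comm]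
        norm_cast
  exact (Nat.isCoprime_iff_coprime.mpr hcop.symm).dvd_of_dvd_mul_right ⟨_, hmul.symm⟩

theorem dvdCount_floor_eq {b : ℕ} (hb : 0 < b) {r s : ℤ} (hs : s ≠ 0) (hsb : IsCoprime s (b : ℤ))
    {y : ℝ} (hy : 0 ≤ y) :
    (dvdCount b r s ⌊y + Int.fract (1 - r / s : ℝ)⌋₊ : ℤ) =
      ⌊y / b - (dwork b (r / s) : ℝ) - (⌊(1 - r / s : ℚ)⌋ : ℝ) / b⌋ + 1 := by
  obtain ⟨k, hkb, hk, hdwork⟩ := exists_dwork_eq (r := r) hb hs hsb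
  have hfloor : ⌊(1 - r / s : ℚ)⌋ = ⌊(1 - r / s : ℝ)⌋ := by
    rw [← Rat.floor_cast (α := ℝ)]
    push_cast
    rfl
  rw [dvdCount_eq_ediv hsb hkb hk, Int.natCast_floor_eq_floor (by positivity),
    ← Int.floor_sub_natCast, ← Int.floor_sub_one, ← Int.floor_div_natCast, hdwork, hfloor,
    Int.fract]
  congr 2
  push_cast
  ring

/-- A solution `i` forces `gcd(s, b) ∣ r`, so that `gcd(r, s, b)` is simply `gcd(s, b)`. -/
theorem gcd_ediv_eq_one_of_dvd_add_mul {b : ℕ} (hb : 0 < b) {r s i : ℤ}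
    (h : (b : ℤ) ∣ r + s * i) :
    Int.gcd (s / ((Int.gcd r s).gcd b : ℕ)) ((b / (Int.gcd r s).gcd b : ℕ) : ℤ) = 1 := by
  have hr : (Int.gcd s b : ℤ) ∣ r :=
    (Int.dvd_add_left ((Int.gcd_dvd_left s b).mul_right i)).mp ((Int.gcd_dvd_right s b).trans h)
  have hgcd : (Int.gcd r s).gcd b = Int.gcd s b := by
    rw [← Int.gcd_natCast_natCast, Int.gcd_assoc]
    exact_mod_cast Int.gcd_eq_right (by positivity) hr
  rw [hgcd, Int.natCast_div]
  exact Int.gcd_ediv_gcd_ediv_gcd (Int.gcd_pos_of_ne_zero_right _ (by exact_mod_cast hb.ne'))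

theorem qdelta_eq_dvdCount {b : ℕ} (hb : 0 < b) (r : ℤ) {s : ℤ} (hs : s ≠ 0) {x : ℝ}
    (hx : 0 ≤ x) :
    qdelta b r s x = dvdCount b r s ⌊b * x + Int.fract (1 - r / s : ℝ)⌋₊ := by
  have hcpos : 0 < (Int.gcd r s).gcd b := Nat.gcd_pos_of_pos_right _ hb
  rw [qdelta]
  split_ifs with hgcd
  · generalize hc : (Int.gcd r s).gcd b = c at hcpos hgcd
    have hcZ : (c : ℤ) ≠ 0 := by exact_mod_cast hcpos.ne'
    have hcrs : (c : ℤ) ∣ Int.gcd r s := by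
      exact_mod_cast hc ▸ Nat.gcd_dvd_left _ _
    obtain ⟨b', rfl⟩ : c ∣ b := hc ▸ Nat.gcd_dvd_right _ _
    obtain ⟨r', rfl⟩ := hcrs.trans (Int.gcd_dvd_left _ _)
    obtain ⟨s', rfl⟩ := hcrs.trans (Int.gcd_dvd_right _ _)
    have hb' : 0 < b' := Nat.pos_of_mul_pos_left hb
    have hdiv (K : Type) [Field K] [CharZero K] :
        ((c * r' : ℤ) : K) / ((c * s' : ℤ) : K) = r' / s' := by
      push_cast
      exact mul_div_mul_left _ _ (by exact_mod_cast hcZ)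
    rw [Int.mul_ediv_cancel_left _ hcZ, Nat.mul_div_cancel_left _ hcpos] at hgcd
    rw [hdiv ℚ, hdiv ℝ, Nat.mul_div_cancel_left _ hcpos, dvdCount_mul_left hcpos,
      dvdCount_floor_eq hb' (right_ne_zero_of_mul hs) (Int.isCoprime_iff_gcd_eq_one.mpr hgcd)
        (by positivity)]
    have hb'R : (b' : ℝ) ≠ 0 := by exact_mod_cast hb'.ne'
    rw [Nat.cast_mul, mul_right_comm, mul_div_cancel_right₀ _ hb'R]
  · rw [dvdCount_eq_zero fun i h => hgcd (gcd_ediv_eq_one_of_dvd_add_mul hb h), Nat.cast_zero]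

theorem natFloor_add_eq_or {y θ : ℝ} (hy : 0 ≤ y) (hθ : θ ∈ Set.Ico (0 : ℝ) 1) :
    ⌊y + θ⌋₊ = ⌊y⌋₊ ∨ ⌊y + θ⌋₊ = ⌊y⌋₊ + 1 := by
  have hle : ⌊y⌋₊ ≤ ⌊y + θ⌋₊ := Nat.floor_mono (by linarith [hθ.1])
  have hge : ⌊y + θ⌋₊ ≤ ⌊y⌋₊ + 1 := by
    rw [← Nat.floor_add_one hy]
    exact Nat.floor_mono (by linarith [hθ.2])
  omega

theorem mul_eq_mul_of_dvd_add_mul {b : ℕ} {r s r' s' i : ℤ} (h : (b : ℤ) ∣ r + s * i)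
    (h' : (b : ℤ) ∣ r' + s' * i) (hb : |s * r' - s' * r| < b) : s * r' = s' * r := by
  have hdvd : (b : ℤ) ∣ s * r' - s' * r := by
    rw [show s * r' - s' * r = s * (r' + s' * i) - s' * (r + s * i) by ring]
    exact dvd_sub (h'.mul_left s) (h.mul_left s')
  exact sub_eq_zero.mp (Int.eq_zero_of_abs_lt_dvd hdvd hb)

/-- If `b` divides `r + s i` and `r' + s' i` for the same `i`, then it divides `s r' - s' r`. So for
`b` large all progressions that are divisible by `b` at `⌊y⌋` have the same ratio, hence the same
shift `θ`, and the others do not see the shift at all. -/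
theorem eventually_exists_dvdCount_floor_add_eq {ι : Type*} [Finite ι] (r s : ι → ℤ) {θ : ι → ℝ}
    (hθ : ∀ i, θ i ∈ Set.Ico (0 : ℝ) 1) (hrs : ∀ i j, s i * r j = s j * r i → θ i = θ j) :
    ∀ᶠ b : ℕ in atTop, ∀ y : ℝ, 0 ≤ y →
      ∃ n, ∀ i, dvdCount b (r i) (s i) ⌊y + θ i⌋₊ = dvdCount b (r i) (s i) n := by
  have hlarge : ∀ᶠ b : ℕ in atTop, ∀ i j, |s i * r j - s j * r i| < b := by
    simp only [eventually_all]
    exact fun i j => tendsto_natCast_atTop_atTop.eventually_gt_atTop _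
  filter_upwards [hlarge] with b hb y hy
  have hconst (i : ι) (hi : ¬ (b : ℤ) ∣ r i + s i * ⌊y⌋₊) (j : ι) :
      dvdCount b (r i) (s i) ⌊y + θ j⌋₊ = dvdCount b (r i) (s i) ⌊y⌋₊ := by
    rcases natFloor_add_eq_or hy (hθ j) with h | h
    · rw [h]
    · rw [h, dvdCount_succ_of_not_dvd hi]
  by_cases hex : ∃ j, (b : ℤ) ∣ r j + s j * ⌊y⌋₊
  · obtain ⟨j, hj⟩ := hex
    refine ⟨⌊y + θ j⌋₊, fun i => ?_⟩
    by_cases hi : (b : ℤ) ∣ r i + s i * ⌊y⌋₊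
    · rw [hrs i j (mul_eq_mul_of_dvd_add_mul hi hj (hb i j))]
    · rw [hconst i hi i, hconst i hi j]
  · push Not at hex
    exact ⟨⌊y⌋₊, fun i => hconst i (hex i) i⟩

/-! ### Exponents of `q`-hypergeometric terms -/

/-- The map `polyZ` as a ring homomorphism `ℤ[q] →+* ℚ(q)`. -/
noncomputable def polyZHom : ℤ[X] →+* RatFunc ℚ :=
  (algebraMap ℚ[X] (RatFunc ℚ)).comp (mapRingHom (Int.castRingHom ℚ))

theorem polyZHom_apply (g : ℤ[X]) : polyZHom g = polyZ g := rfl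

theorem polyZHom_injective : Function.Injective polyZHom :=
  (RatFunc.algebraMap_injective ℚ).comp (map_injective _ Int.cast_injective)

theorem polyZHom_X : polyZHom X = RatFunc.X := by
  simp [polyZHom]

theorem isIntPoly_iff_mem_range {f : RatFunc ℚ} : IsIntPoly f ↔ f ∈ polyZHom.range :=
  exists_congr fun _ => eq_comm

/-- The primes of `ℤ[q]` that occur in `q`-Pochhammer symbols: the cyclotomic polynomials and `q`.
The latter gets the index `0`, which is free because `cyclotomic 0` is `1`. -/
noncomputable def qPrime (d : ℕ) : ℤ[X] :=
  if d = 0 then X else cyclotomic d ℤ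

theorem qPrime_zero : qPrime 0 = X := if_pos rfl

theorem qPrime_of_ne_zero {d : ℕ} (hd : d ≠ 0) : qPrime d = cyclotomic d ℤ := if_neg hd

theorem prime_qPrime (d : ℕ) : Prime (qPrime d) := by
  rcases eq_or_ne d 0 with rfl | hd
  · exact qPrime_zero ▸ prime_X
  · exact qPrime_of_ne_zero hd ▸ (cyclotomic.irreducible (Nat.pos_of_ne_zero hd)).prime

theorem polyZHom_qPrime_ne_zero (d : ℕ) : polyZHom (qPrime d) ≠ 0 :=
  (map_ne_zero_iff _ polyZHom_injective).mpr (prime_qPrime d).ne_zero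

theorem monic_qPrime (d : ℕ) : (qPrime d).Monic := by
  rcases eq_or_ne d 0 with rfl | hd
  · exact qPrime_zero ▸ monic_X
  · exact qPrime_of_ne_zero hd ▸ cyclotomic.monic d ℤ

theorem cyclotomic_ne_X (d : ℕ) : cyclotomic d ℤ ≠ X := by
  intro h
  rcases eq_or_ne d 0 with rfl | hd
  · exact X_ne_C 1 (h.symm.trans (cyclotomic_zero ℤ))
  · have hX : (X : ℤ[X]) ∣ X ^ d - 1 := h ▸ cyclotomic.dvd_X_pow_sub_one d ℤ
    exact prime_X.not_dvd_one ((dvd_sub_right (dvd_pow_self X hd)).mp hX)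

theorem qPrime_injective : Function.Injective qPrime := by
  intro d e h
  rcases eq_or_ne d 0 with rfl | hd <;> rcases eq_or_ne e 0 with rfl | he
  · rfl
  · rw [qPrime_zero, qPrime_of_ne_zero he] at h
    exact absurd h.symm (cyclotomic_ne_X e)
  · rw [qPrime_zero, qPrime_of_ne_zero hd] at h
    exact absurd h (cyclotomic_ne_X d)
  · rw [qPrime_of_ne_zero hd, qPrime_of_ne_zero he] at h
    exact cyclotomic_injective h

theorem pairwise_not_associated_qPrime :
    Pairwise fun d e => ¬ Associated (qPrime d) (qPrime e) :=
  fun d e hde h =>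
    hde (qPrime_injective (eq_of_monic_of_associated (monic_qPrime d) (monic_qPrime e) h))

/-- The exponents of the `qPrime`s in `1 - q ^ m`, for `m ≠ 0`. -/
noncomputable def oneSubExp (m : ℤ) : ℕ →₀ ℤ :=
  Finsupp.single 0 (min m 0) + ∑ d ∈ m.natAbs.divisors, Finsupp.single d 1

theorem oneSubExp_zero (m : ℤ) : oneSubExp m 0 = min m 0 := by
  simp [oneSubExp, Finsupp.single_apply]

theorem oneSubExp_apply {m : ℤ} (hm : m ≠ 0) {d : ℕ} (hd : d ≠ 0) :
    oneSubExp m d = if (d : ℤ) ∣ m then 1 else 0 := by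
  simp [oneSubExp, Finsupp.single_apply, hd.symm, hm, Int.natCast_dvd]

theorem X_pow_sub_one_eq_prod_qPrime {k : ℕ} (hk : k ≠ 0) :
    RatFunc.X ^ k - 1 = ∏ d ∈ k.divisors, polyZHom (qPrime d) := by
  rw [← polyZHom_X, ← map_pow, ← map_one polyZHom, ← map_sub,
    ← prod_cyclotomic_eq_X_pow_sub_one (Nat.pos_of_ne_zero hk), map_prod]
  exact Finset.prod_congr rfl fun d hd => by
    rw [qPrime_of_ne_zero (Nat.pos_of_mem_divisors hd).ne']

theorem hasFactorization_X_pow_sub_one {k : ℕ} (hk : k ≠ 0) :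
    HasFactorization polyZHom qPrime (RatFunc.X ^ k - 1)
      (∑ d ∈ k.divisors, Finsupp.single d 1) := by
  rw [X_pow_sub_one_eq_prod_qPrime hk]
  exact .prod polyZHom_qPrime_ne_zero fun d _ => by
    simpa only [zpow_one] using HasFactorization.zpow_single (φ := polyZHom) (p := qPrime) d 1

theorem hasFactorization_one_sub_X_zpow {m : ℤ} (hm : m ≠ 0) :
    HasFactorization polyZHom qPrime (1 - RatFunc.X ^ m) (oneSubExp m) := by
  have hX : (RatFunc.X : RatFunc ℚ) ≠ 0 := RatFunc.X_ne_zero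
  have hcyc := hasFactorization_X_pow_sub_one (Int.natAbs_ne_zero.mpr hm)
  have hq := HasFactorization.zpow_single (φ := polyZHom) (p := qPrime) 0 (min m 0)
  have hprod := hq.mul polyZHom_qPrime_ne_zero hcyc
  rw [qPrime_zero, polyZHom_X, ← zpow_natCast, mul_sub_one, ← zpow_add₀ hX] at hprod
  rcases le_total 0 m with h | h
  · rw [min_eq_right h, zero_add, zpow_zero, Int.natAbs_of_nonneg h] at hprod
    simpa only [neg_sub, oneSubExp, min_eq_right h] using hprod.neg
  · rw [min_eq_left h, Int.ofNat_natAbs_of_nonpos h, add_neg_cancel, zpow_zero] at hprod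
    simpa only [oneSubExp, min_eq_left h] using hprod

/-- The exponents of the `qPrime`s in `(q^r; q^s)_n`. -/
noncomputable def pochExp (r s : ℤ) (n : ℕ) : ℕ →₀ ℤ :=
  ∑ i ∈ Finset.range n, oneSubExp (r + s * i)

theorem add_mul_ne_zero_of_not_isNonPosInt {p : ℤ × ℤ} (hs : p.2 ≠ 0)
    (hp : ¬ IsNonPosInt (ratOf p)) (i : ℕ) : p.1 + p.2 * i ≠ 0 := by
  intro h
  have hs' : (p.2 : ℚ) ≠ 0 := by exact_mod_cast hs
  have h' : (p.1 : ℚ) + p.2 * i = 0 := by exact_mod_cast h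
  refine hp ⟨-i, by omega, ?_⟩
  rw [ratOf, div_eq_iff hs']
  push_cast
  linarith

theorem hasFactorization_qPoch {r s : ℤ} (hrs : ∀ i : ℕ, r + s * i ≠ 0) (n : ℕ) :
    HasFactorization polyZHom qPrime (qPoch r s n) (pochExp r s n) :=
  .prod polyZHom_qPrime_ne_zero fun i _ => hasFactorization_one_sub_X_zpow (hrs i)

theorem pochExp_apply {r s : ℤ} (hrs : ∀ i : ℕ, r + s * i ≠ 0) (n : ℕ) {d : ℕ} (hd : d ≠ 0) :
    pochExp r s n d = dvdCount d r s n := by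
  rw [pochExp, Finsupp.finsetSum_apply, dvdCount_eq_sum]
  exact Finset.sum_congr rfl fun i _ => oneSubExp_apply (hrs i) hd

theorem abs_min_add_mul_sub_le (r s : ℤ) (i : ℕ) :
    |min (r + s * i) 0 - min s 0 * i| ≤ |r| := by
  have hmul : min s 0 * (i : ℤ) = min (s * i) 0 := by
    rw [min_mul_of_nonneg _ _ (Int.natCast_nonneg i), zero_mul]
  simpa [hmul] using abs_min_sub_min_le_max (r + s * i) 0 (s * i) 0

theorem abs_pochExp_zero_sub_le (r s : ℤ) (n : ℕ) :
    |pochExp r s n 0 - min s 0 * ∑ i ∈ Finset.range n, (i : ℤ)| ≤ n * |r| := by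
  rw [pochExp, Finsupp.finsetSum_apply, Finset.mul_sum, ← Finset.sum_sub_distrib]
  simp only [oneSubExp_zero]
  calc |∑ i ∈ Finset.range n, (min (r + s * i) 0 - min s 0 * i)|
      ≤ ∑ i ∈ Finset.range n, |min (r + s * i) 0 - min s 0 * i| := Finset.abs_sum_le_sum_abs _ _
    _ ≤ ∑ _i ∈ Finset.range n, |r| := Finset.sum_le_sum fun i _ => abs_min_add_mul_sub_le r s i
    _ = n * |r| := by rw [Finset.sum_const, Finset.card_range, nsmul_eq_mul]

section HypExp

variable {v w : ℕ} (rr : Fin v → ℤ × ℤ) (tt : Fin w → ℤ × ℤ)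

/-- The exponents of the `qPrime`s in the `q`-hypergeometric term `Q_{𝐫,𝐭}(q; n)`. -/
noncomputable def hypExp (n : ℕ) : ℕ →₀ ℤ :=
  ∑ i, pochExp (rr i).1 (rr i).2 n - ∑ j, pochExp (tt j).1 (tt j).2 n

theorem exists_abs_hypExp_zero_sub_le : ∃ K : ℤ, ∀ n : ℕ,
    |hypExp rr tt n 0 -
      (∑ i, min (rr i).2 0 - ∑ j, min (tt j).2 0) * ∑ i ∈ Finset.range n, (i : ℤ)| ≤ n * K := by
  have hsum {u : ℕ} (p : Fin u → ℤ × ℤ) (n : ℕ) :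
      |∑ i, pochExp (p i).1 (p i).2 n 0 -
        (∑ i, min (p i).2 0) * ∑ i ∈ Finset.range n, (i : ℤ)| ≤ n * ∑ i, |(p i).1| := by
    rw [Finset.sum_mul, ← Finset.sum_sub_distrib, Finset.mul_sum]
    exact (Finset.abs_sum_le_sum_abs _ _).trans
      (Finset.sum_le_sum fun i _ => abs_pochExp_zero_sub_le _ _ n)
  refine ⟨∑ i, |(rr i).1| + ∑ j, |(tt j).1|, fun n => ?_⟩
  rw [hypExp, Finsupp.sub_apply, Finsupp.finsetSum_apply, Finsupp.finsetSum_apply, sub_mul,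
    sub_sub_sub_comm, mul_add]
  exact (abs_sub _ _).trans (add_le_add (hsum rr n) (hsum tt n))

variable {rr tt}

theorem hasFactorization_qHyp (hrr : ∀ i, ∀ k : ℕ, (rr i).1 + (rr i).2 * k ≠ 0)
    (htt : ∀ j, ∀ k : ℕ, (tt j).1 + (tt j).2 * k ≠ 0) (n : ℕ) :
    HasFactorization polyZHom qPrime (qHyp rr tt n) (hypExp rr tt n) :=
  .div polyZHom_qPrime_ne_zero
    (.prod polyZHom_qPrime_ne_zero fun i _ => hasFactorization_qPoch (hrr i) n)
    (.prod polyZHom_qPrime_ne_zero fun j _ => hasFactorization_qPoch (htt j) n)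

theorem hypExp_apply (hrr : ∀ i, ∀ k : ℕ, (rr i).1 + (rr i).2 * k ≠ 0)
    (htt : ∀ j, ∀ k : ℕ, (tt j).1 + (tt j).2 * k ≠ 0) (n : ℕ) {d : ℕ} (hd : d ≠ 0) :
    hypExp rr tt n d =
      ∑ i, (dvdCount d (rr i).1 (rr i).2 n : ℤ) - ∑ j, (dvdCount d (tt j).1 (tt j).2 n : ℤ) := by
  simp only [hypExp, Finsupp.sub_apply, Finsupp.finsetSum_apply, pochExp_apply (hrr _) n hd,
    pochExp_apply (htt _) n hd]

theorem neg_mul_le_hypExp (hrr : ∀ i, ∀ k : ℕ, (rr i).1 + (rr i).2 * k ≠ 0)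
    (htt : ∀ j, ∀ k : ℕ, (tt j).1 + (tt j).2 * k ≠ 0) (n : ℕ) {d : ℕ} (hd : d ≠ 0) :
    -(n * w : ℤ) ≤ hypExp rr tt n d := by
  have hnum : 0 ≤ ∑ i, (dvdCount d (rr i).1 (rr i).2 n : ℤ) :=
    Finset.sum_nonneg fun _ _ => Int.natCast_nonneg _
  have hden : ∑ j, (dvdCount d (tt j).1 (tt j).2 n : ℤ) ≤ w * n := by
    simpa using Finset.sum_le_card_nsmul Finset.univ _ (n : ℤ) fun j _ =>
      Int.ofNat_le.mpr (dvdCount_le d (tt j).1 (tt j).2 n)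
  rw [hypExp_apply hrr htt n hd]
  linarith

theorem qDeltaFn_natCast_div {b : ℕ} (hb : 0 < b) (hs : ∀ i, (rr i).2 ≠ 0)
    (hu : ∀ j, (tt j).2 ≠ 0) (n : ℕ) :
    qDeltaFn b rr tt (n / b) =
      ∑ i, (dvdCount b (rr i).1 (rr i).2 n : ℤ) - ∑ j, (dvdCount b (tt j).1 (tt j).2 n : ℤ) := by
  have hbR : (b : ℝ) ≠ 0 := by exact_mod_cast hb.ne'
  have hfloor (a : ℝ) : ⌊(b : ℝ) * (n / b) + Int.fract a⌋₊ = n := by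
    rw [mul_div_cancel₀ _ hbR, add_comm, Nat.floor_add_natCast (Int.fract_nonneg a),
      Nat.floor_eq_zero.mpr (Int.fract_lt_one a), zero_add]
  have hx : (0 : ℝ) ≤ n / b := by positivity
  simp only [qDeltaFn, qdelta_eq_dvdCount hb _ (hs _) hx, qdelta_eq_dvdCount hb _ (hu _) hx, hfloor]

theorem eventually_exists_qDeltaFn_eq (hs : ∀ i, (rr i).2 ≠ 0) (hu : ∀ j, (tt j).2 ≠ 0) :
    ∀ᶠ b : ℕ in atTop, ∀ x : ℝ, 0 ≤ x → ∃ n, qDeltaFn b rr tt x =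
      ∑ i, (dvdCount b (rr i).1 (rr i).2 n : ℤ) - ∑ j, (dvdCount b (tt j).1 (tt j).2 n : ℤ) := by
  set p : Fin v ⊕ Fin w → ℤ × ℤ := Sum.elim rr tt
  have hp (k : Fin v ⊕ Fin w) : ((p k).2 : ℝ) ≠ 0 := by
    rcases k with i | j
    · exact_mod_cast hs i
    · exact_mod_cast hu j
  have hratio (k l : Fin v ⊕ Fin w) (h : (p k).2 * (p l).1 = (p l).2 * (p k).1) :
      Int.fract (1 - (p k).1 / (p k).2 : ℝ) = Int.fract (1 - (p l).1 / (p l).2 : ℝ) := by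
    have h' : ((p k).1 : ℝ) * (p l).2 = (p l).1 * (p k).2 := by
      rw [mul_comm, mul_comm ((p l).1 : ℝ)]
      exact_mod_cast h.symm
    rw [(div_eq_div_iff (hp k) (hp l)).mpr h']
  filter_upwards [eventually_gt_atTop 0, eventually_exists_dvdCount_floor_add_eq _ _
    (fun k => ⟨Int.fract_nonneg _, Int.fract_lt_one _⟩) hratio] with b hb hcount x hx
  obtain ⟨n, hn⟩ := hcount (b * x) (by positivity)
  have hrr (i : Fin v) := hn (.inl i)
  have htt (j : Fin w) := hn (.inr j)
  refine ⟨n, ?_⟩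
  simp only [p, Sum.elim_inl, Sum.elim_inr] at hrr htt
  simp only [qDeltaFn, qdelta_eq_dvdCount hb _ (hs _) hx, qdelta_eq_dvdCount hb _ (hu _) hx, hrr,
    htt]

theorem eventually_forall_qDeltaFn_nonneg_iff (hs : ∀ i, (rr i).2 ≠ 0) (hu : ∀ j, (tt j).2 ≠ 0)
    (hrr : ∀ i, ∀ k : ℕ, (rr i).1 + (rr i).2 * k ≠ 0)
    (htt : ∀ j, ∀ k : ℕ, (tt j).1 + (tt j).2 * k ≠ 0) :
    ∀ᶠ b : ℕ in atTop,
      (∀ n, 0 ≤ hypExp rr tt n b) ↔ ∀ x : ℝ, 0 ≤ x → 0 ≤ qDeltaFn b rr tt x := by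
  filter_upwards [eventually_gt_atTop 0, eventually_exists_qDeltaFn_eq hs hu] with b hb hdelta
  constructor
  · intro h x hx
    obtain ⟨n, hn⟩ := hdelta x hx
    rw [hn, ← hypExp_apply hrr htt n hb.ne']
    exact h n
  · intro h n
    rw [hypExp_apply hrr htt n hb.ne', ← qDeltaFn_natCast_div hb hs hu]
    exact h _ (by positivity)

end HypExp

theorem exists_neg_mul_le_iff_nonneg {a : ℕ → ℤ} {S K : ℤ}
    (h : ∀ n : ℕ, |a n - S * ∑ i ∈ Finset.range n, (i : ℤ)| ≤ n * K) :
    (∃ M : ℕ, ∀ n : ℕ, -(n * M : ℤ) ≤ a n) ↔ 0 ≤ S := by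
  constructor
  · rintro ⟨M, hM⟩
    by_contra! hS
    obtain ⟨n, hn⟩ : ∃ n : ℕ, (n : ℤ) = 2 * (M + K.toNat) + 2 := ⟨2 * (M + K.toNat) + 2, by simp⟩
    have hgauss : 2 * ∑ i ∈ Finset.range n, (i : ℤ) = n * (n - 1) := by
      have hnat := Finset.sum_range_id_mul_two n
      zify [show 1 ≤ n by omega] at hnat
      rw [mul_comm, hnat]
    have hsum : 0 ≤ ∑ i ∈ Finset.range n, (i : ℤ) := Finset.sum_nonneg fun _ _ => by positivity
    have hle : ∑ i ∈ Finset.range n, (i : ℤ) ≤ n * (M + K) := by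
      nlinarith [hM n, (abs_le.mp (h n)).2]
    have hlt : n * (M + K) * 2 < (n * (n - 1) : ℤ) := by
      nlinarith [Int.self_le_toNat K]
    linarith
  · intro hS
    refine ⟨K.toNat, fun n => ?_⟩
    have hsum : 0 ≤ S * ∑ i ∈ Finset.range n, (i : ℤ) :=
      mul_nonneg hS (Finset.sum_nonneg fun _ _ => by positivity)
    have hK : (n : ℤ) * K ≤ n * K.toNat := by gcongr; exact Int.self_le_toNat K
    linarith [(abs_le.mp (h n)).1]

theorem sum_filter_neg_eq_sum_min {ι : Type*} (s : Finset ι) (f : ι → ℤ) :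
    ∑ i ∈ s with f i < 0, f i = ∑ i ∈ s, min (f i) 0 := by
  rw [Finset.sum_filter]
  refine Finset.sum_congr rfl fun i _ => ?_
  split_ifs <;> omega

theorem q_integrality_criterion_general {v w : ℕ} (rr : Fin v → ℤ × ℤ) (tt : Fin w → ℤ × ℤ)
    (hs : ∀ i, (rr i).2 ≠ 0) (hu : ∀ j, (tt j).2 ≠ 0)
    (ht : ∀ j, ¬ IsNonPosInt (ratOf (tt j))) (hr : ∀ i, ¬ IsNonPosInt (ratOf (rr i))) :
    (∃ C : Polynomial ℤ, C ≠ 0 ∧ ∀ n : ℕ, IsIntPoly (polyZ C ^ n * qHyp rr tt n)) ↔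
      0 ≤ (∑ i ∈ Finset.univ.filter (fun i => (rr i).2 < 0), (rr i).2) -
          (∑ j ∈ Finset.univ.filter (fun j => (tt j).2 < 0), (tt j).2) ∧
        ∃ N : ℕ, ∀ b : ℕ, N ≤ b → ∀ x : ℝ, 0 ≤ x → 0 ≤ qDeltaFn b rr tt x := by
  have hrr (i : Fin v) := add_mul_ne_zero_of_not_isNonPosInt (hs i) (hr i)
  have htt (j : Fin w) := add_mul_ne_zero_of_not_isNonPosInt (hu j) (ht j)
  obtain ⟨K, hK⟩ := exists_abs_hypExp_zero_sub_le rr tt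
  simp only [isIntPoly_iff_mem_range, ← polyZHom_apply]
  rw [exists_pow_mul_mem_range_iff polyZHom_injective prime_qPrime pairwise_not_associated_qPrime
    (hasFactorization_qHyp hrr htt), Nat.cofinite_eq_atTop,
    eventually_congr (eventually_forall_qDeltaFn_nonneg_iff hs hu hrr htt), eventually_atTop,
    sum_filter_neg_eq_sum_min, sum_filter_neg_eq_sum_min, ← exists_neg_mul_le_iff_nonneg hK]
  refine and_congr_left' ⟨fun h => h 0, fun h d => ?_⟩
  rcases eq_or_ne d 0 with rfl | hd
  · exact h
  · exact ⟨w, fun n => neg_mul_le_hypExp hrr htt n hd⟩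

/-- Corollary 4.2: a first criterion for q-integrality. -/
theorem q_integrality_criterion {v w : ℕ} (rr : Fin v → ℤ × ℤ) (tt : Fin w → ℤ × ℤ)
    (hs : ∀ i, (rr i).2 ≠ 0) (hu : ∀ j, (tt j).2 ≠ 0)
    (ht : ∀ j, ¬ IsNonPosInt (ratOf (tt j))) (hr : ∀ i, ¬ IsNonPosInt (ratOf (rr i)))
    (hsum : 0 ≤ (∑ i ∈ Finset.univ.filter (fun i => (rr i).2 < 0), (rr i).2) -
        (∑ j ∈ Finset.univ.filter (fun j => (tt j).2 < 0), (tt j).2)) :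
    (∃ C : Polynomial ℤ, C ≠ 0 ∧ ∀ n : ℕ, IsIntPoly (polyZ C ^ n * qHyp rr tt n)) ↔
      (∃ N : ℕ, ∀ b : ℕ, N ≤ b → ∀ x : ℝ, 0 ≤ x → 0 ≤ qDeltaFn b rr tt x) :=
  (q_integrality_criterion_general rr tt hs hu ht hr).trans (and_iff_right hsum)
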